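/- Let (G_n)_{n≥1} be a sequence of finite connected simple graphs with growth rates γ(G_n). Then γ(G_n) → ∞ as n → ∞ if and only if Δ(G_n) → ∞ as n → ∞, where Δ(G_n) is the maximal degree of G_n. (Corollary 1.) -/

import Mathlib

open MeasureTheory Filter Topology
open scoped ENNReal Classical

/-- The ballistic deposition height process on a graph `G`, started from `h0`,
driven by the sequence of chosen vertices `X`. -/
noncomputable def heightProcess {V : Type*} [Fintype V] (G : SimpleGraph V)
    (h0 : V → ℕ) (X : ℕ → V) : ℕ → V → ℕ
  | 0 => h0
  | n + 1 => fun x =>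
      if x = X n then
        1 + Finset.univ.sup (fun y =>
          if y = x ∨ G.Adj x y then heightProcess G h0 X n y else 0)
      else heightProcess G h0 X n x

/-- `X` is an i.i.d. sequence of uniformly distributed `V`-valued random variables on `(Ω, μ)`:
every finite cylinder event has the product-of-uniform probabilities. -/
def IsUniformIID {V : Type*} [Fintype V] {Ω : Type*} [MeasurableSpace Ω]
    (μ : Measure Ω) (X : ℕ → Ω → V) : Prop :=
  (∀ (n : ℕ) (v : V), MeasurableSet {ω | X n ω = v}) ∧
  (∀ (n : ℕ) (f : ℕ → V), μ {ω | ∀ k < n, X k ω = f k} = (Fintype.card V : ℝ≥0∞)⁻¹ ^ n)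

/-- `γ` is the growth rate of `G`: `γ > 0` and, for any i.i.d. uniform driving sequence,
almost surely `(#V/n) · max_x H_{x,n} → γ` and `(#V/n) · min_x H_{x,n} → γ`. -/
def IsGrowthRate {V : Type*} [Fintype V] (G : SimpleGraph V) (γ : ℝ) : Prop :=
  0 < γ ∧
  ∀ {Ω : Type} [MeasurableSpace Ω] (μ : Measure Ω) [IsProbabilityMeasure μ]
    (X : ℕ → Ω → V), IsUniformIID μ X →
    (∀ᵐ ω ∂μ, Tendsto (fun n : ℕ =>
        (Fintype.card V : ℝ) *
          (⨆ x : V, (heightProcess G (fun _ => 0) (fun k => X k ω) n x : ℝ)) / n)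
      atTop (𝓝 γ)) ∧
    (∀ᵐ ω ∂μ, Tendsto (fun n : ℕ =>
        (Fintype.card V : ℝ) *
          (⨅ x : V, (heightProcess G (fun _ => 0) (fun k => X k ω) n x : ℝ)) / n)
      atTop (𝓝 γ))

/-! Both directions bound the growth rate through expectations of functions of the height vector.

In one step the expected value of `∑ x, exp (H x)` grows at most by the factor `1 + e (Δ + 1) / #V`:
the new height at the chosen vertex is `1` plus a height in its closed neighbourhood, and every
vertex lies in at most `Δ + 1` closed neighbourhoods. Hence `γ ≤ e (Δ + 1)`.

For the converse, start from a vertex `x` of maximal degree and height `a`. Each neighbour of `x`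
rises at least one level above `a` with each hit, and in `#V` steps its number of hits is at least
`k` with probability bounded below by a constant depending only on `k`. The hit counts of distinct
vertices are negatively correlated, so if `Δ` is large then, with probability at least `1 / 2`, some
neighbour has risen by `k`; a later hit of `x` transfers this rise to `x`. Thus `x` gains on average
at least `(k + 1) / 4` in `2 #V` steps, and `γ ≥ (k + 1) / 8`. -/

open scoped BigOperators

section RandomMap

variable {V S : Type*} [Fintype V]

/-- The averaging operator of the random map `f v`, with `v` uniform: `(avgOp f ^ n) F s` is the
expected value of `F` after `n` independent random maps have been applied to `s`. -/
noncomputable def avgOp (f : V → S → S) : Module.End ℝ (S → ℝ) where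
  toFun F s := 𝔼 v, F (f v s)
  map_add' _ _ := funext fun _ => Finset.expect_add_distrib ..
  map_smul' _ _ := funext fun _ => (Finset.mul_expect ..).symm

theorem avgOp_apply (f : V → S → S) (F : S → ℝ) (s : S) : avgOp f F s = 𝔼 v, F (f v s) := rfl

theorem avgOp_pow_const [Nonempty V] (f : V → S → S) (c : ℝ) (n : ℕ) :
    (avgOp f ^ n) (fun _ => c) = fun _ => c := by
  induction n with
  | zero => rfl
  | succ n ih =>
    have hstep : avgOp f (fun _ => c) = fun _ => c := funext fun _ => Fintype.expect_const c
    rw [pow_succ, Module.End.mul_apply, hstep, ih]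

theorem avgOp_pow_le_of_avgOp_le {f : V → S → S} {A : Set S} (hA : ∀ v, Set.MapsTo (f v) A A)
    {F : S → ℝ} {Φ : ℕ → S → ℝ} (hzero : ∀ s ∈ A, F s ≤ Φ 0 s)
    (hsucc : ∀ n, ∀ s ∈ A, avgOp f (Φ n) s ≤ Φ (n + 1) s) (n : ℕ) :
    ∀ s ∈ A, (avgOp f ^ n) F s ≤ Φ n s := by
  induction n with
  | zero => exact hzero
  | succ n ih =>
    intro s hs
    rw [pow_succ', Module.End.mul_apply]
    exact (Finset.expect_le_expect fun v _ => ih _ (hA v hs)).trans (hsucc n s hs)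

theorem avgOp_pow_le_avgOp_pow {f : V → S → S} {A : Set S} (hA : ∀ v, Set.MapsTo (f v) A A)
    {F F' : S → ℝ} (h : ∀ s ∈ A, F s ≤ F' s) (n : ℕ) {s : S} (hs : s ∈ A) :
    (avgOp f ^ n) F s ≤ (avgOp f ^ n) F' s :=
  avgOp_pow_le_of_avgOp_le (Φ := fun n => (avgOp f ^ n) F') hA h
    (fun n s _ => by rw [pow_succ', Module.End.mul_apply]) n s hs

theorem avgOp_pow_mono (f : V → S → S) (n : ℕ) {F F' : S → ℝ} (h : F ≤ F') :
    (avgOp f ^ n) F ≤ (avgOp f ^ n) F' :=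
  fun _ => avgOp_pow_le_avgOp_pow (fun _ => Set.mapsTo_univ _ _) (fun s _ => h s) n
    (Set.mem_univ _)

theorem avgOp_pow_const_add_mul [Nonempty V] (f : V → S → S) (a b : ℝ) (F : S → ℝ) (n : ℕ)
    (s : S) : (avgOp f ^ n) (fun s => a + b * F s) s = a + b * (avgOp f ^ n) F s := by
  have h := map_add (avgOp f ^ n) (fun _ => a) (b • F)
  rw [map_smul, avgOp_pow_const] at h
  exact congrFun h s

theorem add_nat_mul_le_avgOp_pow_mul [Nonempty V] {f : V → S → S} {F : S → ℝ} {c : ℝ} {n : ℕ}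
    (h : ∀ s, F s + c ≤ (avgOp f ^ n) F s) (m : ℕ) (s : S) :
    F s + m * c ≤ (avgOp f ^ (n * m)) F s := by
  induction m generalizing s with
  | zero => simp
  | succ m ih =>
    calc F s + (m + 1 : ℕ) * c = c + 1 * (F s + m * c) := by push_cast; ring
      _ ≤ c + 1 * (avgOp f ^ (n * m)) F s := by gcongr; exact ih s
      _ = (avgOp f ^ (n * m)) (fun s => c + 1 * F s) s := (avgOp_pow_const_add_mul ..).symm
      _ ≤ (avgOp f ^ (n * m)) ((avgOp f ^ n) F) s :=
          avgOp_pow_mono f (n * m) (fun s => by linarith [h s]) s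
      _ = (avgOp f ^ (n * (m + 1))) F s := by rw [Nat.mul_succ, pow_add, Module.End.mul_apply]

theorem expect_snoc (n : ℕ) (Φ : (Fin (n + 1) → V) → ℝ) :
    𝔼 w, Φ w = 𝔼 w : Fin n → V, 𝔼 v, Φ (Fin.snoc (α := fun _ => V) w v) := by
  rw [← Fintype.expect_equiv (Fin.snocEquiv fun _ => V)
    (fun p => Φ (Fin.snoc (α := fun _ => V) p.2 p.1)) Φ fun _ => rfl, Finset.expect_comm,
    ← Finset.expect_product', Finset.univ_product_univ]

theorem avgOp_pow_apply (f : V → S → S) (F : S → ℝ) (n : ℕ) (s : S) :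
    (avgOp f ^ n) F s = 𝔼 w : Fin n → V, F (Fin.foldl n (fun s i => f (w i) s) s) := by
  induction n generalizing F with
  | zero => simp
  | succ n ih =>
    simp only [pow_succ, Module.End.mul_apply, ih, avgOp_apply, expect_snoc, Fin.foldl_succ_last,
      Fin.snoc_castSucc, Fin.snoc_last]

end RandomMap

section UniformIID

variable {V : Type*} [Fintype V] {Ω : Type*} [MeasurableSpace Ω] {μ : Measure Ω} {X : ℕ → Ω → V}

theorem IsUniformIID.measurable_word [MeasurableSpace V] (hX : IsUniformIID μ X) (n : ℕ) :
    Measurable fun ω (i : Fin n) => X i ω :=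
  measurable_pi_lambda _ fun i => measurable_to_countable' fun v => hX.1 i v

theorem IsUniformIID.measurable_comp_word {E : Type*} [MeasurableSpace E] (hX : IsUniformIID μ X)
    (n : ℕ) (Φ : (Fin n → V) → E) : Measurable fun ω => Φ fun i => X i ω :=
  let _ : MeasurableSpace V := ⊤
  (measurable_of_finite Φ).comp (hX.measurable_word n)

theorem IsUniformIID.measure_word_eq [Nonempty V] (hX : IsUniformIID μ X) {n : ℕ} (w : Fin n → V) :
    μ {ω | (fun i : Fin n => X i ω) = w} = (Fintype.card V : ℝ≥0∞)⁻¹ ^ n := by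
  rw [← hX.2 n fun k => if h : k < n then w ⟨k, h⟩ else Classical.arbitrary V]
  congr 1 with ω
  simp only [Set.mem_ofPred_eq, funext_iff, Fin.forall_iff]
  exact forall₂_congr fun k hk => by rw [dif_pos hk]

theorem IsUniformIID.integral_comp_word [Nonempty V] [IsProbabilityMeasure μ]
    (hX : IsUniformIID μ X) (n : ℕ) (Φ : (Fin n → V) → ℝ) :
    ∫ ω, Φ (fun i => X i ω) ∂μ = 𝔼 w, Φ w := by
  let _ : MeasurableSpace V := ⊤
  have hw := hX.measurable_word n
  have := Measure.isProbabilityMeasure_map (μ := μ) hw.aemeasurable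
  have hlaw (w : Fin n → V) :
      (μ.map fun ω (i : Fin n) => X i ω).real {w} = (Fintype.card (Fin n → V) : ℝ)⁻¹ := by
    rw [measureReal_def, Measure.map_apply hw (measurableSet_singleton w)]
    exact (congrArg ENNReal.toReal (hX.measure_word_eq w)).trans (by simp)
  rw [← integral_map (φ := fun ω (i : Fin n) => X i ω) hw.aemeasurable
    (measurable_of_finite Φ).aestronglyMeasurable, integral_fintype .of_finite]
  simp only [hlaw, smul_eq_mul]
  rw [← Finset.mul_sum, Fintype.expect_eq_sum_div_card, div_eq_inv_mul]

end UniformIID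

theorem exists_isUniformIID (V : Type*) [Fintype V] [Nonempty V] :
    ∃ (Ω : Type) (_ : MeasurableSpace Ω) (μ : Measure Ω) (X : ℕ → Ω → V),
      IsProbabilityMeasure μ ∧ IsUniformIID μ X := by
  let e := Fintype.equivFin V
  have : Nonempty (Fin (Fintype.card V)) := e.symm.nonempty
  let ν := (PMF.uniformOfFintype (Fin (Fintype.card V))).toMeasure
  refine ⟨ℕ → Fin (Fintype.card V), inferInstance, Measure.infinitePi fun _ => ν,
    fun k ω => e.symm (ω k), inferInstance, fun k v => ?_, fun n f => ?_⟩
  · have hcoord : Measurable fun ω : ℕ → Fin (Fintype.card V) => ω k := measurable_pi_apply k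
    simp only [e.symm_apply_eq]
    exact hcoord (measurableSet_singleton (e v))
  · have hcyl : {ω : ℕ → Fin (Fintype.card V) | ∀ k < n, e.symm (ω k) = f k} =
        Set.pi (Finset.range n) fun k => {e (f k)} := by
      ext ω; simp [Set.mem_pi, e.symm_apply_eq]
    rw [hcyl, Measure.infinitePi_pi _ fun _ _ => measurableSet_singleton _]
    simp [ν]

section BinomialTail

/-- The probability that a binomial variable with `n` trials of success probability `p` is smaller
than `k`, defined by recursion on the number of trials; the truncation `0 - 1 = 0` is harmless
because the value at `k = 0` is `0`. -/
noncomputable def binomialLT (p : ℝ) : ℕ → ℕ → ℝ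
  | 0, k => if k = 0 then 0 else 1
  | n + 1, k => (1 - p) * binomialLT p n k + p * binomialLT p n (k - 1)

variable {p : ℝ}

theorem binomialLT_zero_right (p : ℝ) (n : ℕ) : binomialLT p n 0 = 0 := by
  induction n with
  | zero => rfl
  | succ n ih => simp [binomialLT, ih]

theorem binomialLT_one_right (p : ℝ) (n : ℕ) : binomialLT p n 1 = (1 - p) ^ n := by
  induction n with
  | zero => rfl
  | succ n ih => simp [binomialLT, ih, binomialLT_zero_right, pow_succ']

theorem binomialLT_mono (hp₀ : 0 ≤ p) (hp₁ : p ≤ 1) (n : ℕ) : Monotone (binomialLT p n) := by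
  have := sub_nonneg.2 hp₁
  induction n with
  | zero => intro k l hkl; simp only [binomialLT]; split_ifs <;> grind
  | succ n ih =>
    intro k l hkl
    simp only [binomialLT]
    gcongr
    exacts [ih hkl, ih (Nat.sub_le_sub_right hkl 1)]

theorem binomialLT_nonneg (hp₀ : 0 ≤ p) (hp₁ : p ≤ 1) (n k : ℕ) : 0 ≤ binomialLT p n k :=
  (binomialLT_zero_right p n).symm.le.trans (binomialLT_mono hp₀ hp₁ n k.zero_le)

theorem choose_mul_pow_mul_pow_le_one_sub_binomialLT (hp₀ : 0 ≤ p) (hp₁ : p ≤ 1) (n k : ℕ) :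
    n.choose k * p ^ k * (1 - p) ^ n ≤ 1 - binomialLT p n k := by
  have hq := sub_nonneg.2 hp₁
  induction n generalizing k with
  | zero => cases k <;> simp [binomialLT]
  | succ n ih =>
    cases k with
    | zero => simpa [binomialLT_zero_right] using pow_le_one₀ hq (by linarith)
    | succ k =>
      calc ((n + 1).choose (k + 1) : ℝ) * p ^ (k + 1) * (1 - p) ^ (n + 1)
          = (1 - p) * (n.choose (k + 1) * p ^ (k + 1) * (1 - p) ^ n) +
              p * (n.choose k * p ^ k * (1 - p) ^ (n + 1)) := by
            rw [Nat.choose_succ_succ]; push_cast; ring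
        _ ≤ (1 - p) * (n.choose (k + 1) * p ^ (k + 1) * (1 - p) ^ n) +
              p * (n.choose k * p ^ k * (1 - p) ^ n) := by
            gcongr (1 - p) * _ + p * (_ * ?_)
            exact pow_le_pow_of_le_one hq (by linarith) n.le_succ
        _ ≤ (1 - p) * (1 - binomialLT p n (k + 1)) + p * (1 - binomialLT p n k) := by
            gcongr
            exacts [ih (k + 1), ih k]
        _ = 1 - binomialLT p (n + 1) (k + 1) := by
            simp only [binomialLT, Nat.add_sub_cancel]; ring

theorem exp_neg_two_le_one_sub_inv_pow {n : ℕ} (hn : 2 ≤ n) :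
    Real.exp (-2) ≤ (1 - (n : ℝ)⁻¹) ^ n := by
  have hn' : (2 : ℝ) ≤ n := by exact_mod_cast hn
  have hinv : Real.exp (-(2 / n)) ≤ 1 - (n : ℝ)⁻¹ := by
    rw [Real.exp_neg]
    calc (Real.exp (2 / n))⁻¹ ≤ (2 / n + 1 : ℝ)⁻¹ := by gcongr; exact Real.add_one_le_exp _
      _ ≤ 1 - (n : ℝ)⁻¹ := by
        rw [inv_le_iff_one_le_mul₀ (by positivity)]
        field_simp
        nlinarith
  calc Real.exp (-2) = Real.exp (-(2 / n)) ^ n := by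
        rw [← Real.exp_nat_mul]; congr 1; field_simp
    _ ≤ (1 - (n : ℝ)⁻¹) ^ n := by gcongr

theorem inv_le_choose_mul_inv_pow {n k : ℕ} (hkn : 2 * k ≤ n) (hn : 0 < n) :
    ((2 : ℝ) ^ k * k.factorial)⁻¹ ≤ n.choose k * (n : ℝ)⁻¹ ^ k := by
  have hhalf : (n : ℝ) / 2 ≤ (n + 1 - k : ℕ) := by
    rw [div_le_iff₀ two_pos]; exact_mod_cast (by omega : n ≤ (n + 1 - k) * 2)
  calc ((2 : ℝ) ^ k * k.factorial)⁻¹ = (n / 2 : ℝ) ^ k / k.factorial * (n : ℝ)⁻¹ ^ k := by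
        rw [div_pow, inv_pow]; field_simp
    _ ≤ ((n + 1 - k : ℕ) : ℝ) ^ k / k.factorial * (n : ℝ)⁻¹ ^ k := by gcongr
    _ ≤ n.choose k * (n : ℝ)⁻¹ ^ k := by gcongr; exact Nat.pow_le_choose k n

theorem binomialLT_inv_le {n k : ℕ} (hkn : 2 * k ≤ n) (hn : 2 ≤ n) :
    binomialLT (n : ℝ)⁻¹ n k ≤ 1 - ((2 : ℝ) ^ k * k.factorial)⁻¹ * Real.exp (-2) := by
  have htail := choose_mul_pow_mul_pow_le_one_sub_binomialLT (inv_nonneg.2 n.cast_nonneg)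
    (Nat.cast_inv_le_one n) n k
  have := mul_le_mul (inv_le_choose_mul_inv_pow hkn (by omega)) (exp_neg_two_le_one_sub_inv_pow hn)
    (by positivity) (by positivity)
  linarith

theorem exists_forall_binomialLT_inv_pow_le (k : ℕ) {ε : ℝ} (hε : 0 < ε) :
    ∃ D : ℕ, ∀ d n : ℕ, D ≤ d → d < n → binomialLT (n : ℝ)⁻¹ n k ^ d ≤ ε := by
  set q : ℝ := 1 - ((2 : ℝ) ^ k * k.factorial)⁻¹ * Real.exp (-2)
  have hq : q < 1 := sub_lt_self 1 (by positivity)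
  have hle {n : ℕ} (hkn : 2 * k ≤ n) (hn : 2 ≤ n) : binomialLT (n : ℝ)⁻¹ n k ≤ q :=
    binomialLT_inv_le hkn hn
  have hnonneg (n : ℕ) : 0 ≤ binomialLT (n : ℝ)⁻¹ n k :=
    binomialLT_nonneg (inv_nonneg.2 n.cast_nonneg) (Nat.cast_inv_le_one n) n k
  have hq₀ : 0 ≤ q := (hnonneg (2 * k + 2)).trans (hle (by omega) (by omega))
  obtain ⟨m, hm⟩ := exists_pow_lt_of_lt_one hε hq
  refine ⟨m + 2 * k + 1, fun d n hd hn => ?_⟩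
  calc binomialLT (n : ℝ)⁻¹ n k ^ d ≤ q ^ d := by
        gcongr
        exacts [hnonneg n, hle (by omega) (by omega)]
    _ ≤ q ^ m := pow_le_pow_of_le_one hq₀ hq.le (by omega)
    _ ≤ ε := hm.le

end BinomialTail

section NegativeAssociation

variable {V : Type*} [Fintype V] [Nonempty V]

theorem expect_ite_eq_const (y : V) (a b : ℝ) :
    𝔼 v, (if y = v then b else a) =
      (1 - (Fintype.card V : ℝ)⁻¹) * a + (Fintype.card V : ℝ)⁻¹ * b := by
  have hsplit (v : V) : (if y = v then b else a) = a + if y = v then b - a else 0 := by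
    split_ifs <;> ring
  have hcard : (Fintype.card V : ℝ) ≠ 0 := by exact_mod_cast Fintype.card_ne_zero
  simp only [hsplit, Finset.expect_add_distrib, Fintype.expect_const]
  rw [Fintype.expect_eq_sum_div_card, Finset.sum_ite_eq, if_pos (Finset.mem_univ y)]
  field_simp
  ring

-- At most one of the factors is `β`, and it is then the smaller value: this makes the factors
-- negatively correlated.
theorem expect_prod_ite_le_prod_expect_ite {α β : V → ℝ} (hβ : 0 ≤ β) (hβα : β ≤ α)
    (t : Finset V) :
    𝔼 v, ∏ y ∈ t, (if y = v then β y else α y) ≤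
      ∏ y ∈ t, 𝔼 v, (if y = v then β y else α y) := by
  induction t using Finset.induction_on with
  | empty => simp
  | insert i t hi ih =>
    set P : V → ℝ := fun v => ∏ y ∈ t, if y = v then β y else α y
    have hPi : P i = ∏ y ∈ t, α y :=
      Finset.prod_congr rfl fun y hy => if_neg (ne_of_mem_of_not_mem hy hi)
    have hPle (v : V) : P v ≤ P i := by
      rw [hPi]
      exact Finset.prod_le_prod (fun y _ => by split_ifs; exacts [hβ y, (hβ y).trans (hβα y)])
        fun y _ => by split_ifs; exacts [hβα y, le_rfl]
    have hsplit (v : V) :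
        (if i = v then β i else α i) * P v =
          α i * P v - (α i - β i) * if i = v then P i else 0 := by
      split_ifs with h
      · subst h; ring
      · ring
    have hmean : 𝔼 v, P v ≤ P i :=
      (Finset.expect_le_expect fun v _ => hPle v).trans (Fintype.expect_const _).le
    have hfactor : 0 ≤ 𝔼 v, if i = v then β i else α i :=
      Finset.expect_nonneg fun v _ => by split_ifs; exacts [hβ i, (hβ i).trans (hβα i)]
    simp only [Finset.prod_insert hi]
    calc 𝔼 v, (if i = v then β i else α i) * P v
        = α i * 𝔼 v, P v - (α i - β i) * ((Fintype.card V : ℝ)⁻¹ * P i) := by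
          simp only [hsplit, Finset.expect_sub_distrib, ← Finset.mul_expect, expect_ite_eq_const]
          ring
      _ ≤ α i * 𝔼 v, P v - (α i - β i) * ((Fintype.card V : ℝ)⁻¹ * 𝔼 v, P v) := by
          have := sub_nonneg.2 (hβα i)
          gcongr
      _ = (𝔼 v, if i = v then β i else α i) * 𝔼 v, P v := by rw [expect_ite_eq_const]; ring
      _ ≤ (𝔼 v, if i = v then β i else α i) * ∏ y ∈ t, 𝔼 v, (if y = v then β y else α y) := by
          gcongr

end NegativeAssociation

section Deposit

variable {V : Type*} [Fintype V] (G : SimpleGraph V)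

/-- One step of ballistic deposition: a block is dropped on `v` when the heights are `s`. -/
noncomputable def deposit (v : V) (s : V → ℕ) : V → ℕ := fun x =>
  if x = v then 1 + Finset.univ.sup (fun y => if y = x ∨ G.Adj x y then s y else 0) else s x

variable {G}

theorem deposit_of_ne {v x : V} (h : x ≠ v) (s : V → ℕ) : deposit G v s x = s x := if_neg h

theorem lt_deposit_self {v y : V} (h : y = v ∨ G.Adj v y) (s : V → ℕ) :
    s y < deposit G v s v := by
  have hsup := Finset.le_sup (f := fun y => if y = v ∨ G.Adj v y then s y else 0)
    (Finset.mem_univ y)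
  rw [if_pos h] at hsup
  simp only [deposit, if_true]
  omega

theorem le_deposit (v : V) (s : V → ℕ) (x : V) : s x ≤ deposit G v s x := by
  rcases eq_or_ne x v with rfl | h
  · exact (lt_deposit_self (.inl rfl) s).le
  · exact (deposit_of_ne h s).ge

theorem exists_deposit_self_eq (v : V) (s : V → ℕ) :
    ∃ y, (y = v ∨ G.Adj v y) ∧ deposit G v s v = s y + 1 := by
  obtain ⟨y, -, hy⟩ := Finset.exists_mem_eq_sup Finset.univ ⟨v, Finset.mem_univ v⟩
    fun y => if y = v ∨ G.Adj v y then s y else 0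
  have hv := lt_deposit_self (G := G) (.inl rfl) (y := v) s
  simp only [deposit, if_true, hy] at hv ⊢
  split_ifs at hv ⊢ with h
  · exact ⟨y, h, add_comm _ _⟩
  · exact ⟨v, .inl rfl, by omega⟩

theorem mapsTo_deposit_setOf_le (a : ℕ) (x v : V) :
    Set.MapsTo (deposit G v) {s | a ≤ s x} {s | a ≤ s x} :=
  fun s hs => le_trans hs (le_deposit v s x)

theorem heightProcess_eq_foldl (G : SimpleGraph V) (h0 : V → ℕ) (X : ℕ → V) (n : ℕ) :
    heightProcess G h0 X n = Fin.foldl n (fun s i => deposit G (X i) s) h0 := by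
  induction n with
  | zero => rfl
  | succ n ih =>
    rw [Fin.foldl_succ_last]
    exact congrArg (deposit G (X n)) ih

theorem heightProcess_le_add {h0 : V → ℕ} {c : ℕ} (hc : ∀ x, h0 x ≤ c) (X : ℕ → V) (n : ℕ)
    (x : V) : heightProcess G h0 X n x ≤ c + n := by
  induction n generalizing x with
  | zero => exact hc x
  | succ n ih =>
    change deposit G (X n) (heightProcess G h0 X n) x ≤ c + n + 1
    rcases eq_or_ne x (X n) with rfl | h
    · obtain ⟨y, -, hy⟩ := exists_deposit_self_eq (G := G) (X n) (heightProcess G h0 X n)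
      exact hy.trans_le (Nat.succ_le_succ (ih y))
    · exact (deposit_of_ne h _).trans_le ((ih x).trans (Nat.le_succ _))

theorem IsUniformIID.integral_heightProcess [Nonempty V] {Ω : Type*} [MeasurableSpace Ω]
    {μ : Measure Ω} [IsProbabilityMeasure μ] {X : ℕ → Ω → V} (hX : IsUniformIID μ X)
    (F : (V → ℕ) → ℝ) (h0 : V → ℕ) (n : ℕ) :
    ∫ ω, F (heightProcess G h0 (fun k => X k ω) n) ∂μ = (avgOp (deposit G) ^ n) F h0 := by
  simp only [heightProcess_eq_foldl, avgOp_pow_apply]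
  exact hX.integral_comp_word n fun w => F (Fin.foldl n (fun s i => deposit G (w i) s) h0)

theorem IsGrowthRate.tendsto_avgOp_pow [Nonempty V] {γ : ℝ} (h : IsGrowthRate G γ) :
    Tendsto (fun n : ℕ => (Fintype.card V : ℝ) / n *
      (avgOp (deposit G) ^ n) (fun s => ⨆ x, (s x : ℝ)) (fun _ => 0)) atTop (𝓝 γ) := by
  obtain ⟨Ω, _, μ, X, _, hX⟩ := exists_isUniformIID V
  set M : ℕ → Ω → ℝ := fun n ω => ⨆ x, (heightProcess G (fun _ => 0) (fun k => X k ω) n x : ℝ)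
  have hmeas (n : ℕ) : Measurable (M n) := by
    simp only [M, heightProcess_eq_foldl]
    exact hX.measurable_comp_word n fun w =>
      ⨆ x, ((Fin.foldl n (fun s i => deposit G (w i) s) fun _ => 0) x : ℝ)
  have hbound (n : ℕ) (ω : Ω) : ‖Fintype.card V * M n ω / n‖ ≤ Fintype.card V := by
    have hM₀ : 0 ≤ M n ω := Real.iSup_nonneg fun x => Nat.cast_nonneg _
    have hM : M n ω ≤ n := ciSup_le fun x => by
      simpa using heightProcess_le_add (G := G) (fun _ => le_refl 0) (fun k => X k ω) n x
    rw [Real.norm_of_nonneg (by positivity), mul_div_assoc]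
    exact mul_le_of_le_one_right (Nat.cast_nonneg _) (div_le_one_of_le₀ hM n.cast_nonneg)
  have hlim := tendsto_integral_of_dominated_convergence (μ := μ) (f := fun _ => γ)
    (fun _ => (Fintype.card V : ℝ))
    (fun n => (((hmeas n).const_mul _).div_const _).aestronglyMeasurable)
    (integrable_const _) (fun n => .of_forall (hbound n)) (h.2 μ X hX).1
  simp only [integral_const, probReal_univ, one_smul] at hlim
  refine hlim.congr fun n => ?_
  rw [← hX.integral_heightProcess, ← integral_const_mul]
  exact integral_congr_ae (.of_forall fun ω => mul_div_right_comm ..)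

end Deposit

section UpperBound

variable {V : Type*} [Fintype V] (G : SimpleGraph V) [DecidableRel G.Adj]

theorem exp_deposit_self_le (v : V) (s : V → ℕ) :
    Real.exp (deposit G v s v) ≤
      Real.exp 1 * (Real.exp (s v) + ∑ y ∈ G.neighborFinset v, Real.exp (s y)) := by
  obtain ⟨y, hy, heq⟩ := exists_deposit_self_eq (G := G) v s
  rw [heq, Nat.cast_succ, add_comm, Real.exp_add]
  gcongr
  have hsum : 0 ≤ ∑ y ∈ G.neighborFinset v, Real.exp (s y) := by positivity
  rcases hy with rfl | hy
  · linarith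
  · have := Finset.single_le_sum (f := fun y => Real.exp (s y)) (fun _ _ => (Real.exp_pos _).le)
      ((G.mem_neighborFinset v y).2 hy)
    linarith [Real.exp_pos (s v)]

theorem sum_sum_neighborFinset_le {f : V → ℝ} (hf : 0 ≤ f) :
    ∑ v, ∑ y ∈ G.neighborFinset v, f y ≤ G.maxDegree * ∑ y, f y := by
  rw [Finset.sum_comm' (s' := fun y => G.neighborFinset y) (t' := Finset.univ)
    (by simp [G.adj_comm]), Finset.mul_sum]
  gcongr with y
  rw [Finset.sum_const, G.card_neighborFinset_eq_degree, nsmul_eq_mul]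
  gcongr
  exacts [hf y, G.degree_le_maxDegree y]

variable [Nonempty V]

theorem avgOp_sum_exp_le (s : V → ℕ) :
    avgOp (deposit G) (fun s => ∑ x, Real.exp (s x)) s ≤
      (1 + Real.exp 1 * (G.maxDegree + 1) / Fintype.card V) * ∑ x, Real.exp (s x) := by
  have hstep (v : V) : ∑ x, Real.exp (deposit G v s x) ≤
      ∑ x, Real.exp (s x) + Real.exp (deposit G v s v) := by
    rw [← Finset.add_sum_erase _ _ (Finset.mem_univ v), add_comm]
    gcongr
    calc ∑ x ∈ Finset.univ.erase v, Real.exp (deposit G v s x)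
        = ∑ x ∈ Finset.univ.erase v, Real.exp (s x) :=
          Finset.sum_congr rfl fun x hx => by rw [deposit_of_ne (Finset.ne_of_mem_erase hx)]
      _ ≤ ∑ x, Real.exp (s x) :=
          Finset.sum_le_univ_sum_of_nonneg fun x => (Real.exp_pos _).le
  have htotal : ∑ v, Real.exp (deposit G v s v) ≤
      Real.exp 1 * (G.maxDegree + 1) * ∑ x, Real.exp (s x) := by
    calc ∑ v, Real.exp (deposit G v s v)
        ≤ ∑ v, Real.exp 1 * (Real.exp (s v) + ∑ y ∈ G.neighborFinset v, Real.exp (s y)) := by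
          gcongr with v
          exact exp_deposit_self_le G v s
      _ = Real.exp 1 * (∑ x, Real.exp (s x) +
            ∑ v, ∑ y ∈ G.neighborFinset v, Real.exp (s y)) := by
          rw [← Finset.mul_sum, Finset.sum_add_distrib]
      _ ≤ Real.exp 1 * (∑ x, Real.exp (s x) + G.maxDegree * ∑ x, Real.exp (s x)) := by
          gcongr
          exact sum_sum_neighborFinset_le G fun y => (Real.exp_pos _).le
      _ = Real.exp 1 * (G.maxDegree + 1) * ∑ x, Real.exp (s x) := by ring
  calc avgOp (deposit G) (fun s => ∑ x, Real.exp (s x)) s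
      ≤ 𝔼 v, (∑ x, Real.exp (s x) + Real.exp (deposit G v s v)) :=
        Finset.expect_le_expect fun v _ => hstep v
    _ = ∑ x, Real.exp (s x) + (∑ v, Real.exp (deposit G v s v)) / Fintype.card V := by
        rw [Finset.expect_add_distrib, Fintype.expect_const, Fintype.expect_eq_sum_div_card]
    _ ≤ ∑ x, Real.exp (s x) +
          Real.exp 1 * (G.maxDegree + 1) * (∑ x, Real.exp (s x)) / Fintype.card V := by gcongr
    _ = _ := by ring

theorem avgOp_pow_sum_exp_le (n : ℕ) (s : V → ℕ) :
    (avgOp (deposit G) ^ n) (fun s => ∑ x, Real.exp (s x)) s ≤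
      Real.exp (Real.exp 1 * (G.maxDegree + 1) / Fintype.card V * n) * ∑ x, Real.exp (s x) := by
  set r : ℝ := Real.exp 1 * (G.maxDegree + 1) / Fintype.card V
  have hr₀ : 0 ≤ r := by positivity
  have hpow : (avgOp (deposit G) ^ n) (fun s => ∑ x, Real.exp (s x)) s ≤
      (1 + r) ^ n * ∑ x, Real.exp (s x) := by
    refine avgOp_pow_le_of_avgOp_le (F := fun s : V → ℕ => ∑ x, Real.exp (s x))
      (Φ := fun n s => (1 + r) ^ n * ∑ x, Real.exp (s x)) (fun _ => Set.mapsTo_univ _ _)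
      (fun s _ => by simp) (fun n s _ => ?_) n s (Set.mem_univ s)
    calc avgOp (deposit G) (fun s => (1 + r) ^ n * ∑ x, Real.exp (s x)) s
        = (1 + r) ^ n * avgOp (deposit G) (fun s => ∑ x, Real.exp (s x)) s :=
          (Finset.mul_expect ..).symm
      _ ≤ (1 + r) ^ n * ((1 + r) * ∑ x, Real.exp (s x)) := by
          gcongr
          exact avgOp_sum_exp_le G s
      _ = (1 + r) ^ (n + 1) * ∑ x, Real.exp (s x) := by ring
  have hexp : (1 + r) ^ n ≤ Real.exp (r * n) := by
    rw [mul_comm, Real.exp_nat_mul, add_comm]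
    gcongr
    exact Real.add_one_le_exp r
  exact hpow.trans (by gcongr)

theorem avgOp_pow_iSup_le (n : ℕ) :
    (avgOp (deposit G) ^ n) (fun s => ⨆ x, (s x : ℝ)) (fun _ => 0) ≤
      Real.exp 1 * (G.maxDegree + 1) / Fintype.card V * n + Fintype.card V := by
  set L : ℝ := Real.exp 1 * (G.maxDegree + 1) / Fintype.card V * n with hL
  have hpoint (s : V → ℕ) : ⨆ x, (s x : ℝ) ≤ L + Real.exp (-L) * ∑ x, Real.exp (s x) := by
    refine ciSup_le fun x => ?_
    have hsum := Finset.single_le_sum (f := fun x => Real.exp (s x))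
      (fun _ _ => (Real.exp_pos _).le) (Finset.mem_univ x)
    calc (s x : ℝ) ≤ L + Real.exp (-L + s x) := by linarith [Real.add_one_le_exp (-L + s x)]
      _ = L + Real.exp (-L) * Real.exp (s x) := by rw [Real.exp_add]
      _ ≤ L + Real.exp (-L) * ∑ x, Real.exp (s x) := by gcongr
  calc (avgOp (deposit G) ^ n) (fun s => ⨆ x, (s x : ℝ)) (fun _ => 0)
      ≤ L + Real.exp (-L) *
          (avgOp (deposit G) ^ n) (fun s => ∑ x, Real.exp (s x)) (fun _ => 0) :=
        (avgOp_pow_mono _ n hpoint _).trans_eq (avgOp_pow_const_add_mul ..)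
    _ ≤ L + Real.exp (-L) * (Real.exp L * Fintype.card V) := by
        gcongr
        simpa [hL] using avgOp_pow_sum_exp_le G n fun _ => 0
    _ = L + Fintype.card V := by rw [← mul_assoc, ← Real.exp_add]; simp

variable {G}

theorem IsGrowthRate.le_exp_one_mul_maxDegree_add_one {γ : ℝ} (h : IsGrowthRate G γ) :
    γ ≤ Real.exp 1 * (G.maxDegree + 1) := by
  have hlim : Tendsto (fun n : ℕ => Real.exp 1 * (G.maxDegree + 1) + (Fintype.card V : ℝ) ^ 2 / n)
      atTop (𝓝 (Real.exp 1 * (G.maxDegree + 1))) := by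
    simpa using (tendsto_const_div_atTop_nhds_zero_nat ((Fintype.card V : ℝ) ^ 2)).const_add
      (Real.exp 1 * (G.maxDegree + 1))
  refine le_of_tendsto_of_tendsto h.tendsto_avgOp_pow hlim ?_
  filter_upwards [eventually_gt_atTop 0] with n hn
  calc (Fintype.card V : ℝ) / n *
        (avgOp (deposit G) ^ n) (fun s => ⨆ x, (s x : ℝ)) (fun _ => 0)
      ≤ Fintype.card V / n *
          (Real.exp 1 * (G.maxDegree + 1) / Fintype.card V * n + Fintype.card V) := by
        gcongr
        exact avgOp_pow_iSup_le G n
    _ = Real.exp 1 * (G.maxDegree + 1) + (Fintype.card V : ℝ) ^ 2 / n := by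
        have hcard : (Fintype.card V : ℝ) ≠ 0 := by exact_mod_cast Fintype.card_ne_zero
        field_simp

end UpperBound

section LowerBound

variable {V : Type*} [Fintype V] [Nonempty V] {G : SimpleGraph V}

-- The growth of a neighbour of `x` above the level `a ≤ s x` dominates its number of hits, so the
-- product bounds the probability that no vertex of `t` is `k` above `a` in `n` further steps.
theorem avgOp_prod_binomialLT_le {x : V} {t : Finset V} (hxt : ∀ y ∈ t, G.Adj y x) {a : ℕ}
    {s : V → ℕ} (hs : a ≤ s x) (k n : ℕ) :
    avgOp (deposit G)
        (fun s => ∏ y ∈ t, binomialLT (Fintype.card V : ℝ)⁻¹ n (k - (s y - a))) s ≤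
      ∏ y ∈ t, binomialLT (Fintype.card V : ℝ)⁻¹ (n + 1) (k - (s y - a)) := by
  set q := binomialLT (Fintype.card V : ℝ)⁻¹ n with hq
  have hp₀ : 0 ≤ (Fintype.card V : ℝ)⁻¹ := by positivity
  have hp₁ : (Fintype.card V : ℝ)⁻¹ ≤ 1 := Nat.cast_inv_le_one _
  have hmono : Monotone q := binomialLT_mono hp₀ hp₁ n
  have hnonneg (j : ℕ) : 0 ≤ q j := binomialLT_nonneg hp₀ hp₁ n j
  have hfactor (v y : V) (hy : y ∈ t) : q (k - (deposit G v s y - a)) ≤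
      if y = v then q (k - (s y - a) - 1) else q (k - (s y - a)) := by
    split_ifs with h
    · subst h
      have hself := lt_deposit_self (G := G) (.inl rfl) (y := y) s
      have hcenter := lt_deposit_self (.inr (hxt y hy)) s
      exact hmono (by omega)
    · rw [deposit_of_ne h]
  calc avgOp (deposit G) (fun s => ∏ y ∈ t, q (k - (s y - a))) s
      ≤ 𝔼 v, ∏ y ∈ t, (if y = v then q (k - (s y - a) - 1) else q (k - (s y - a))) :=
        Finset.expect_le_expect fun v _ =>
          Finset.prod_le_prod (fun y _ => hnonneg _) (hfactor v)
    _ ≤ ∏ y ∈ t, 𝔼 v, (if y = v then q (k - (s y - a) - 1) else q (k - (s y - a))) :=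
        expect_prod_ite_le_prod_expect_ite (fun y => hnonneg _) (fun y => hmono (Nat.sub_le _ _)) t
    _ = ∏ y ∈ t, binomialLT (Fintype.card V : ℝ)⁻¹ (n + 1) (k - (s y - a)) := by
        simp only [expect_ite_eq_const, binomialLT, hq]

theorem avgOp_pow_indicator_forall_lt_le {x : V} {t : Finset V} (hxt : ∀ y ∈ t, G.Adj y x)
    {a k : ℕ} (hk : 0 < k) {s : V → ℕ} (hs : a ≤ s x) (n : ℕ) :
    (avgOp (deposit G) ^ n) ({s | ∀ y ∈ t, s y < a + k}.indicator 1) s ≤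
      binomialLT (Fintype.card V : ℝ)⁻¹ n k ^ t.card := by
  have hp₀ : 0 ≤ (Fintype.card V : ℝ)⁻¹ := by positivity
  have hp₁ : (Fintype.card V : ℝ)⁻¹ ≤ 1 := Nat.cast_inv_le_one _
  have hnonneg (n j : ℕ) : 0 ≤ binomialLT (Fintype.card V : ℝ)⁻¹ n j :=
    binomialLT_nonneg hp₀ hp₁ n j
  have hzero (s : V → ℕ) : {s : V → ℕ | ∀ y ∈ t, s y < a + k}.indicator (1 : (V → ℕ) → ℝ) s ≤
      ∏ y ∈ t, binomialLT (Fintype.card V : ℝ)⁻¹ 0 (k - (s y - a)) := by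
    refine Set.indicator_apply_le' (fun h => ?_) fun _ => Finset.prod_nonneg fun y _ => hnonneg _ _
    refine (Finset.prod_eq_one fun y hy => if_neg ?_).ge
    have : s y < a + k := h y hy
    omega
  calc (avgOp (deposit G) ^ n) ({s | ∀ y ∈ t, s y < a + k}.indicator 1) s
      ≤ ∏ y ∈ t, binomialLT (Fintype.card V : ℝ)⁻¹ n (k - (s y - a)) :=
        avgOp_pow_le_of_avgOp_le
          (Φ := fun n s => ∏ y ∈ t, binomialLT (Fintype.card V : ℝ)⁻¹ n (k - (s y - a)))
          (mapsTo_deposit_setOf_le a x) (fun s _ => hzero s)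
          (fun n s hs => avgOp_prod_binomialLT_le hxt hs k n) n s hs
    _ ≤ ∏ _y ∈ t, binomialLT (Fintype.card V : ℝ)⁻¹ n k :=
        Finset.prod_le_prod (fun y _ => hnonneg n _)
          fun y _ => binomialLT_mono hp₀ hp₁ n (Nat.sub_le _ _)
    _ = binomialLT (Fintype.card V : ℝ)⁻¹ n k ^ t.card := Finset.prod_const _

theorem avgOp_pow_card_indicator_lt_le_half {x y : V} (hxy : G.Adj x y) {a : ℕ} {s : V → ℕ}
    (hs : a ≤ s y) :
    (avgOp (deposit G) ^ Fintype.card V) ({s | s x < a + 1}.indicator 1) s ≤ 1 / 2 := by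
  have hmain := avgOp_pow_indicator_forall_lt_le (t := {x}) (by simpa using hxy) one_pos hs
    (Fintype.card V)
  simp only [Finset.mem_singleton, forall_eq, Finset.card_singleton, pow_one,
    binomialLT_one_right] at hmain
  have hexp : (1 - (Fintype.card V : ℝ)⁻¹) ^ Fintype.card V ≤ Real.exp (-1) := by
    simpa using Real.one_sub_div_pow_le_exp_neg (t := 1)
      (by exact_mod_cast Fintype.card_pos (α := V))
  calc _ ≤ (1 - (Fintype.card V : ℝ)⁻¹) ^ Fintype.card V := hmain
    _ ≤ (Real.exp 1)⁻¹ := hexp.trans_eq (Real.exp_neg 1)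
    _ ≤ 1 / 2 := by
      rw [one_div]
      gcongr
      linarith [Real.add_one_le_exp (1 : ℝ)]

theorem IsGrowthRate.card_mul_div_le {γ c : ℝ} {x : V} {n : ℕ} (h : IsGrowthRate G γ) (hn : 0 < n)
    (hgain : ∀ s : V → ℕ, (s x : ℝ) + c ≤ (avgOp (deposit G) ^ n) (fun s => s x) s) :
    Fintype.card V * c / n ≤ γ := by
  refine ge_of_tendsto (h.tendsto_avgOp_pow.comp (tendsto_id.const_mul_atTop' hn)) ?_
  filter_upwards [eventually_gt_atTop 0] with m hm
  have hsup (s : V → ℕ) : (s x : ℝ) ≤ ⨆ x, (s x : ℝ) :=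
    le_ciSup (f := fun x => (s x : ℝ)) (Set.finite_range _).bddAbove x
  have : (0 : ℝ) < n := Nat.cast_pos.2 hn
  have : (0 : ℝ) < m := Nat.cast_pos.2 hm
  calc Fintype.card V * c / n = Fintype.card V / (n * m : ℕ) * (m * c) := by
        push_cast; field_simp
    _ ≤ Fintype.card V / (n * m : ℕ) *
          (avgOp (deposit G) ^ (n * m)) (fun s => s x) (fun _ => 0) := by
        gcongr
        simpa using add_nat_mul_le_avgOp_pow_mul hgain m fun _ => 0
    _ ≤ Fintype.card V / (n * m : ℕ) *
          (avgOp (deposit G) ^ (n * m)) (fun s => ⨆ x, (s x : ℝ)) (fun _ => 0) :=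
        mul_le_mul_of_nonneg_left (avgOp_pow_mono _ _ hsup _) (by positivity)

variable [DecidableRel G.Adj] {x : V} {k : ℕ}

theorem avgOp_pow_two_mul_card_indicator_lt_le (hk : 0 < k)
    (hx : binomialLT (Fintype.card V : ℝ)⁻¹ (Fintype.card V) k ^ G.degree x ≤ 1 / 2) {a : ℕ}
    {s : V → ℕ} (hs : a ≤ s x) :
    (avgOp (deposit G) ^ (2 * Fintype.card V)) ({s | s x < a + k + 1}.indicator 1) s ≤ 3 / 4 := by
  set N := Fintype.card V
  set B : Set (V → ℕ) := {s | ∀ y ∈ G.neighborFinset x, s y < a + k}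
  have hsecond (s : V → ℕ) : (avgOp (deposit G) ^ N) ({s | s x < a + k + 1}.indicator 1) s ≤
      1 / 2 + 1 / 2 * B.indicator 1 s := by
    by_cases h : s ∈ B
    · calc (avgOp (deposit G) ^ N) ({s | s x < a + k + 1}.indicator 1) s
          ≤ (avgOp (deposit G) ^ N) (fun _ => 1) s :=
            avgOp_pow_mono _ N (Set.indicator_le_self' fun _ _ => zero_le_one) s
        _ = 1 / 2 + 1 / 2 * B.indicator 1 s := by
            rw [avgOp_pow_const, Set.indicator_of_mem h, Pi.one_apply]; norm_num
    · obtain ⟨y, hxy, hy⟩ : ∃ y, G.Adj x y ∧ a + k ≤ s y := by simpa [B] using h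
      rw [Set.indicator_of_notMem h, mul_zero, add_zero]
      exact avgOp_pow_card_indicator_lt_le_half hxy hy
  have hfirst : (avgOp (deposit G) ^ N) (B.indicator 1) s ≤ 1 / 2 :=
    (avgOp_pow_indicator_forall_lt_le (fun y hy => ((G.mem_neighborFinset x y).1 hy).symm) hk hs
      N).trans (by rwa [G.card_neighborFinset_eq_degree])
  calc (avgOp (deposit G) ^ (2 * N)) ({s | s x < a + k + 1}.indicator 1) s
      = (avgOp (deposit G) ^ N)
          ((avgOp (deposit G) ^ N) ({s | s x < a + k + 1}.indicator 1)) s := by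
        rw [two_mul, pow_add, Module.End.mul_apply]
    _ ≤ (avgOp (deposit G) ^ N) (fun s => 1 / 2 + 1 / 2 * B.indicator 1 s) s :=
        avgOp_pow_mono _ N hsecond s
    _ = 1 / 2 + 1 / 2 * (avgOp (deposit G) ^ N) (B.indicator 1) s := avgOp_pow_const_add_mul ..
    _ ≤ 3 / 4 := by linarith

theorem add_le_avgOp_pow_two_mul_card (hk : 0 < k)
    (hx : binomialLT (Fintype.card V : ℝ)⁻¹ (Fintype.card V) k ^ G.degree x ≤ 1 / 2)
    (s : V → ℕ) :
    (s x : ℝ) + (k + 1) / 4 ≤ (avgOp (deposit G) ^ (2 * Fintype.card V)) (fun s => s x) s := by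
  set B : Set (V → ℕ) := {s' | s' x < s x + k + 1}
  have hpoint : ∀ s' ∈ {s' : V → ℕ | s x ≤ s' x},
      (s x + (k + 1) : ℝ) + -(k + 1) * B.indicator 1 s' ≤ s' x := by
    intro s' hs'
    by_cases h : s' ∈ B
    · have hle : (s x : ℝ) ≤ s' x := Nat.cast_le.2 hs'
      rw [Set.indicator_of_mem h, Pi.one_apply]
      linarith
    · have hle : s x + k + 1 ≤ s' x := not_lt.1 h
      rw [Set.indicator_of_notMem h, mul_zero, add_zero]
      exact_mod_cast hle
  have hfail := avgOp_pow_two_mul_card_indicator_lt_le hk hx (le_refl (s x))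
  have : (0 : ℝ) ≤ k := k.cast_nonneg
  calc (s x : ℝ) + (k + 1) / 4
      ≤ s x + (k + 1) +
          -(k + 1) * (avgOp (deposit G) ^ (2 * Fintype.card V)) (B.indicator 1) s := by
        nlinarith
    _ = (avgOp (deposit G) ^ (2 * Fintype.card V))
          (fun s' => (s x + (k + 1) : ℝ) + -(k + 1) * B.indicator 1 s') s :=
        (avgOp_pow_const_add_mul ..).symm
    _ ≤ (avgOp (deposit G) ^ (2 * Fintype.card V)) (fun s => s x) s :=
        avgOp_pow_le_avgOp_pow (mapsTo_deposit_setOf_le (s x) x) hpoint _ (le_refl (s x))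

theorem IsGrowthRate.succ_div_eight_le {γ : ℝ} (h : IsGrowthRate G γ) (hk : 0 < k)
    (hx : binomialLT (Fintype.card V : ℝ)⁻¹ (Fintype.card V) k ^ G.degree x ≤ 1 / 2) :
    (k + 1) / 8 ≤ γ := by
  have hcard : (Fintype.card V : ℝ) ≠ 0 := by exact_mod_cast Fintype.card_ne_zero
  calc ((k : ℝ) + 1) / 8 = Fintype.card V * ((k + 1) / 4) / (2 * Fintype.card V : ℕ) := by
        push_cast; field_simp; norm_num
    _ ≤ γ := h.card_mul_div_le (Nat.mul_pos two_pos Fintype.card_pos)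
        (add_le_avgOp_pow_two_mul_card hk hx)

end LowerBound

theorem stmt17_general {ι : Type*} {l : Filter ι} (V : ι → Type*) [∀ i, Fintype (V i)]
    [∀ i, Nonempty (V i)] (G : ∀ i, SimpleGraph (V i)) [∀ i, DecidableRel (G i).Adj] (γ : ι → ℝ)
    (hγ : ∀ i, IsGrowthRate (G i) (γ i)) :
    Tendsto γ l atTop ↔ Tendsto (fun i => (G i).maxDegree) l atTop := by
  constructor
  · intro h
    have hupper (i : ι) : γ i / Real.exp 1 + -1 ≤ (G i).maxDegree := by
      have := (div_le_iff₀' (Real.exp_pos 1)).2 (hγ i).le_exp_one_mul_maxDegree_add_one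
      linarith
    exact tendsto_natCast_atTop_iff.1 (tendsto_atTop_mono hupper
      (tendsto_atTop_add_const_right l (-1) (h.atTop_div_const (Real.exp_pos 1))))
  · intro h
    refine tendsto_atTop.2 fun b => ?_
    obtain ⟨k, hk⟩ := exists_nat_ge (8 * b)
    obtain ⟨D, hD⟩ := exists_forall_binomialLT_inv_pow_le (k + 1) one_half_pos
    filter_upwards [h.eventually_ge_atTop D] with i hi
    obtain ⟨x, hx⟩ := (G i).exists_maximal_degree_vertex
    have := (hγ i).succ_div_eight_le k.succ_pos
      (hD _ _ (hx ▸ hi) ((G i).degree_lt_card_verts x))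
    push_cast at this
    linarith

theorem stmt17 (V : ℕ → Type) [∀ k, Fintype (V k)]
    (G : ∀ k, SimpleGraph (V k)) [∀ k, DecidableRel (G k).Adj] (γ : ℕ → ℝ)
    (hconn : ∀ k, (G k).Connected)
    (hγ : ∀ k, IsGrowthRate (G k) (γ k)) :
    Tendsto γ atTop atTop ↔ Tendsto (fun k => (G k).maxDegree) atTop atTop :=
  have (k : ℕ) : Nonempty (V k) := (hconn k).nonempty
  stmt17_general V G γ hγ
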